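/- Let ω be a nondegenerate alternating bilinear form on a finite-dimensional K-vector space V, and let A, U ⊆ V be subspaces such that A ∩ A^⊥ = {0} and dim(A ∩ U) + 1 ≥ dim U. Then dim(A + U^⊥) + 1 ≥ dim V. (Linear-algebra core of the proof of the paper's Lemma [lm:proj-def], establishing the inequality (eq:dual-ver): A abstracts the annihilator of ι*(TM), which is a symplectic subspace by Avila–Eskin–Möller, and U abstracts the span u(V) of the circumference curves of an M-parallel class of cylinders, which meets A in codimension at most one.) -/

import Mathlib

open Module

/-- For a bilinear form `ω` on `V` and a subspace `S ⊆ V`, the perp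
`S^⊥ = {v ∈ V : ω(v, s) = 0 for all s ∈ S}`. -/
def perp {K V : Type*} [Field K] [AddCommGroup V] [Module K V]
    (ω : V →ₗ[K] V →ₗ[K] K) (S : Submodule K V) : Submodule K V where
  carrier := {v | ∀ s ∈ S, ω v s = 0}
  add_mem' := by
    intro a b ha hb s hs
    simp [ha s hs, hb s hs]
  zero_mem' := by
    intro s hs
    simp
  smul_mem' := by
    intro c v hv s hs
    simp [hv s hs]

/-!
Since `A ∩ A^⊥ = 0`, every functional on `A` has the form `ω(a, ·)` with `a ∈ A`, so that
`A + A^⊥ = V` and a fortiori `A + W^⊥ = V` for `W = A ∩ U`. Hence `V / (A + U^⊥)` is a quotient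
of `W^⊥ / U^⊥`, which `ω` embeds into the dual of `U / W`, and its dimension is at most
`dim U - dim W`.
-/

section Codimension

variable {R M N : Type*} [Ring R] [StrongRankCondition R] [AddCommGroup M] [Module R M]
  [AddCommGroup N] [Module R N] [IsNoetherian R N]

theorem finrank_quotient_sup_inf_ker_le {P Q : Submodule R M} (hPQ : Codisjoint P Q)
    (g : M →ₗ[R] N) :
    finrank R (M ⧸ (P ⊔ Q ⊓ g.ker)) ≤ finrank R N := by
  let π : Q →ₗ[R] M ⧸ (P ⊔ Q ⊓ g.ker) := (Submodule.mkQ _).domRestrict Q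
  have hπ : Function.Surjective π := by
    rw [LinearMap.surjective_domRestrict_iff (Submodule.mkQ_surjective _), Submodule.ker_mkQ]
    exact hPQ.symm.mono_right le_sup_left
  have hker : (g.domRestrict Q).ker ≤ π.ker := fun q hq =>
    (Submodule.Quotient.mk_eq_zero _).2 (Submodule.mem_sup_right ⟨q.2, hq⟩)
  have hlift : Function.Surjective (Submodule.liftQ _ π hker) := by
    rw [← LinearMap.range_eq_top, Submodule.range_liftQ, LinearMap.range_eq_top.2 hπ]
  let φ : (g.domRestrict Q).range →ₗ[R] M ⧸ (P ⊔ Q ⊓ g.ker) :=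
    (Submodule.liftQ _ π hker).comp (g.domRestrict Q).quotKerEquivRange.symm.toLinearMap
  have hφ : Function.Surjective φ := hlift.comp (LinearEquiv.surjective _)
  exact (LinearMap.finrank_le_finrank_of_surjective hφ).trans (Submodule.finrank_le _)

end Codimension

section Perp

variable {K V : Type*} [Field K] [AddCommGroup V] [Module K V] (ω : V →ₗ[K] V →ₗ[K] K)

theorem ker_domRestrict₂_eq_perp (S : Submodule K V) : (ω.domRestrict₂ S).ker = perp ω S := by
  ext v
  exact LinearMap.ext_iff.trans Subtype.forall

variable {ω}

theorem perp_anti {S T : Submodule K V} (h : S ≤ T) : perp ω T ≤ perp ω S :=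
  fun _ hv s hs => hv s (h hs)

theorem perp_sup (S T : Submodule K V) : perp ω (S ⊔ T) = perp ω S ⊓ perp ω T := by
  refine le_antisymm (le_inf (perp_anti le_sup_left) (perp_anti le_sup_right)) ?_
  rintro v ⟨hS, hT⟩ u hu
  obtain ⟨s, hs, t, ht, rfl⟩ := Submodule.mem_sup.1 hu
  rw [map_add, hS s hs, hT t ht, add_zero]

theorem codisjoint_perp_of_disjoint_perp {A : Submodule K V} [FiniteDimensional K A]
    (hA : Disjoint A (perp ω A)) : Codisjoint A (perp ω A) := by
  let β : V →ₗ[K] Dual K A := ω.domRestrict₂ A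
  have hinj : Function.Injective (β.domRestrict A) := by
    rwa [LinearMap.injective_domRestrict_iff, ker_domRestrict₂_eq_perp]
  have hsurj : Function.Surjective (β.domRestrict A) :=
    (LinearMap.injective_iff_surjective_of_finrank_eq_finrank Subspace.dual_finrank_eq.symm).1 hinj
  have hβ : Function.Surjective β := fun f => (hsurj f).imp' _ fun _ ha => ha
  rw [← ker_domRestrict₂_eq_perp]
  exact (LinearMap.surjective_domRestrict_iff hβ).1 hsurj

theorem dim_sup_perp_ge_general (A U : Submodule K V) [FiniteDimensional K A]
    [FiniteDimensional K U] (hA : A ⊓ perp ω A = ⊥) :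
    finrank K (V ⧸ (A ⊔ perp ω U)) + finrank K ↥(A ⊓ U) ≤ finrank K U := by
  obtain ⟨C, hdisj, hC⟩ := IsModularLattice.exists_disjoint_and_sup_eq (inf_le_right : A ⊓ U ≤ U)
  have : FiniteDimensional K C := Submodule.finiteDimensional_of_le (hC ▸ le_sup_right)
  have hcodisj : Codisjoint A (perp ω (A ⊓ U)) :=
    (codisjoint_perp_of_disjoint_perp (disjoint_iff.2 hA)).mono_right (perp_anti inf_le_left)
  have hperp : perp ω U = perp ω (A ⊓ U) ⊓ (ω.domRestrict₂ C).ker := by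
    rw [ker_domRestrict₂_eq_perp, ← perp_sup, hC]
  have hdim : finrank K U = finrank K ↥(A ⊓ U) + finrank K C := by
    rw [← Submodule.finrank_sup_add_finrank_inf_eq, hdisj.eq_bot, finrank_bot, add_zero, hC]
  have hcodim : finrank K (V ⧸ (A ⊔ perp ω U)) ≤ finrank K C := by
    rw [hperp, ← Subspace.dual_finrank_eq (K := K) (V := C)]
    exact finrank_quotient_sup_inf_ker_le hcodisj (ω.domRestrict₂ C)
  omega

end Perp

/-- Linear-algebra core of the proof of Lemma `lm:proj-def` (inequality (eq:dual-ver)):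
if `ω` is a nondegenerate alternating bilinear form on a finite-dimensional `V`,
`A ∩ A^⊥ = 0` and `dim(A ∩ U) + 1 ≥ dim U`, then `dim(A + U^⊥) + 1 ≥ dim V`. -/
theorem dim_sup_perp_ge {K V : Type*} [Field K] [AddCommGroup V] [Module K V]
    [FiniteDimensional K V]
    (ω : V →ₗ[K] V →ₗ[K] K)
    (halt : ∀ v : V, ω v v = 0)
    (hnd : ∀ v : V, (∀ w : V, ω v w = 0) → v = 0)
    (A U : Submodule K V)
    (hA : A ⊓ perp ω A = ⊥)
    (hU : finrank K ↥(A ⊓ U) + 1 ≥ finrank K ↥U) :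
    finrank K ↥(A ⊔ perp ω U) + 1 ≥ finrank K V := by
  have hcodim := dim_sup_perp_ge_general A U hA
  have hquot := (A ⊔ perp ω U).finrank_quotient_add_finrank
  omega
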